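/- Let S ⊂ ℤ² be a finite nonempty subset connected with respect to grid adjacency, and let v ∈ ℤ² be a nonzero vector such that S ∩ (S + v) = ∅. Then for all integers k ≠ ℓ, the translates S + k·v and S + ℓ·v are disjoint. -/

import Mathlib

/-- Grid adjacency on ℤ²: two points are adjacent iff their ℓ¹-distance is 1. -/
def GridAdj (p q : ℤ × ℤ) : Prop := |p.1 - q.1| + |p.2 - q.2| = 1

/-- A subset of ℤ² is grid-connected if any two of its points are joined by a
path of adjacent points staying inside the set. -/
def GridConnected (S : Set (ℤ × ℤ)) : Prop :=
  ∀ p ∈ S, ∀ q ∈ S,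
    Relation.ReflTransGen (fun a b => GridAdj a b ∧ a ∈ S ∧ b ∈ S) p q

/-- Translate of a subset of ℤ² by a vector. -/
def setTranslate (S : Set (ℤ × ℤ)) (v : ℤ × ℤ) : Set (ℤ × ℤ) := (· + v) '' S

/-!
The theorem is a lattice version of Hopf's theorem on chords of a planar continuum: the positive
multiples of a direction that are not chords of a connected set `S`, i.e. not differences of two
of its points, are closed under addition. Any chord joins two points of a finite connected subset,
so let `S` be finite, and apply a symmetry of the grid to make the direction `v` point to the
right. Let `p` and `q` be points of `S` extreme in the direction transverse to `v`. A path in `S`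
from `q` to `p`, prolonged by a vertical ray up from `p` and one down from `q`, cuts the plane
into a left and a right side. A translate of `S` parallel to `v` stays between the extreme levels,
so it never meets the rays; if it also misses `S`, it lies on one side. If `u` and `w` are
non-chords, then `S + u` lies on the right and `S - w` on the left, hence they are disjoint and
`u + w` is not a chord.
-/

lemma gridAdj_cases {x y : ℤ × ℤ} (h : GridAdj x y) :
    (y.1 = x.1 + 1 ∧ y.2 = x.2) ∨ (x.1 = y.1 + 1 ∧ y.2 = x.2) ∨
      (y.1 = x.1 ∧ y.2 = x.2 + 1) ∨ (y.1 = x.1 ∧ x.2 = y.2 + 1) := by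
  unfold GridAdj at h
  grind

lemma GridAdj.symm {x y : ℤ × ℤ} (h : GridAdj x y) : GridAdj y x := by
  simpa only [GridAdj, abs_sub_comm] using h

lemma GridAdj.swap {x y : ℤ × ℤ} (h : GridAdj x y) : GridAdj x.swap y.swap := by
  simpa only [GridAdj, Prod.fst_swap, Prod.snd_swap, add_comm] using h

lemma GridAdj.add_right {x y : ℤ × ℤ} (h : GridAdj x y) (u : ℤ × ℤ) :
    GridAdj (x + u) (y + u) := by
  simpa only [GridAdj, Prod.fst_add, Prod.snd_add, add_sub_add_right_eq_sub] using h

namespace GridConnected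

variable {S : Set (ℤ × ℤ)}

lemma eq_of_forall_gridAdj {α : Type*} (hS : GridConnected S) {f : ℤ × ℤ → α}
    (hf : ∀ x ∈ S, ∀ y ∈ S, GridAdj x y → f x = f y) {x y : ℤ × ℤ} (hx : x ∈ S) (hy : y ∈ S) :
    f x = f y := by
  induction hS x hx y hy with
  | refl => rfl
  | tail _ hstep ih => exact (ih hstep.2.1).trans (hf _ hstep.2.1 _ hstep.2.2 hstep.1)

lemma preimage_swap (hS : GridConnected S) : GridConnected (Prod.swap ⁻¹' S) := fun _ hx _ hy =>
  (hS _ hx _ hy).lift Prod.swap fun _ _ ⟨hadj, ha, hb⟩ => ⟨hadj.swap, ha, hb⟩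

lemma insert_of_gridAdj (hS : GridConnected S) {x y : ℤ × ℤ} (hx : x ∈ S) (hxy : GridAdj x y) :
    GridConnected (insert y S) := by
  have within : ∀ a ∈ S, ∀ b ∈ S, Relation.ReflTransGen
      (fun a b => GridAdj a b ∧ a ∈ insert y S ∧ b ∈ insert y S) a b := fun a ha b hb =>
    .mono (fun _ _ ⟨hadj, hc, hd⟩ => ⟨hadj, Or.inr hc, Or.inr hd⟩) a b (hS a ha b hb)
  rintro a (rfl | ha) b (rfl | hb)
  · exact .refl
  · exact .head ⟨hxy.symm, Or.inl rfl, Or.inr hx⟩ (within x hx b hb)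
  · exact .tail (within a ha x hx) ⟨hxy, Or.inr hx, Or.inl rfl⟩
  · exact within a ha b hb

lemma exists_finite_subset (hS : GridConnected S) {x y : ℤ × ℤ} (hx : x ∈ S) (hy : y ∈ S) :
    ∃ T ⊆ S, T.Finite ∧ GridConnected T ∧ x ∈ T ∧ y ∈ T := by
  induction hS x hx y hy with
  | refl =>
    refine ⟨{x}, by simpa using hx, Set.finite_singleton x, ?_, rfl, rfl⟩
    rintro a rfl b rfl
    exact .refl
  | @tail b c _ hstep ih =>
    obtain ⟨T, hTS, hfin, hT, hxT, hbT⟩ := ih hstep.2.1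
    exact ⟨insert c T, Set.insert_subset hy hTS, hfin.insert c, hT.insert_of_gridAdj hbT hstep.1,
      Or.inr hxT, Or.inl rfl⟩

end GridConnected

/-- `v` is a chord of `S` if it is the difference of two points of `S`. -/
def HasChord (S : Set (ℤ × ℤ)) (v : ℤ × ℤ) : Prop := ∃ x ∈ S, x + v ∈ S

lemma HasChord.mono {S T : Set (ℤ × ℤ)} {v : ℤ × ℤ} (hST : S ⊆ T) (hS : HasChord S v) :
    HasChord T v :=
  let ⟨x, hx, hxv⟩ := hS
  ⟨x, hST hx, hST hxv⟩

lemma hasChord_neg {S : Set (ℤ × ℤ)} {v : ℤ × ℤ} : HasChord S (-v) ↔ HasChord S v := by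
  constructor <;> rintro ⟨x, hx, hxv⟩ <;> exact ⟨_, hxv, by simpa using hx⟩

lemma hasChord_preimage_swap {S : Set (ℤ × ℤ)} {v : ℤ × ℤ} :
    HasChord (Prod.swap ⁻¹' S) v.swap ↔ HasChord S v := by
  constructor <;> rintro ⟨x, hx, hxv⟩ <;> exact ⟨x.swap, hx, hxv⟩

lemma setTranslate_inter_eq_empty_iff {S : Set (ℤ × ℤ)} {u w : ℤ × ℤ} :
    setTranslate S u ∩ setTranslate S w = ∅ ↔ ¬ HasChord S (u - w) := by
  rw [← Set.not_nonempty_iff_eq_empty, not_iff_not]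
  constructor
  · rintro ⟨_, ⟨x, hx, rfl⟩, y, hy, hyx⟩
    have hxy : x + (u - w) = y := by rw [← add_sub_assoc, sub_eq_iff_eq_add]; exact hyx.symm
    exact ⟨x, hx, hxy ▸ hy⟩
  · rintro ⟨x, hx, hxy⟩
    exact ⟨x + u, ⟨x, hx, rfl⟩, _, hxy, by simp [add_assoc]⟩

/-- The open vertical ray going up from `p`. -/
def upRay (p : ℤ × ℤ) : Set (ℤ × ℤ) := {x | x.1 = p.1 ∧ p.2 < x.2}

/-- The open vertical ray going down from `q`. -/
def downRay (q : ℤ × ℤ) : Set (ℤ × ℤ) := {x | x.1 = q.1 ∧ x.2 < q.2}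

/-- `c` counts how often one passes from left to right across a curve that comes up the ray
`downRay q`, runs through `S` from `q` to `p`, and leaves along `upRay p`. The curve is thought of
as pushed by `(1/2, -1/2)` off the lattice points, so that jumps occur only on the edges leaving a
point of the curve to the right or downwards. -/
structure IsSideFunction (S : Set (ℤ × ℤ)) (q p : ℤ × ℤ) (c : ℤ × ℤ → ℤ) : Prop where
  right : ∀ i j, (i, j) ∉ S → c (i + 1, j) =
    c (i, j) + (if i = p.1 ∧ p.2 < j then 1 else 0) + (if i = q.1 ∧ j < q.2 then 1 else 0)
  up : ∀ i j, (i, j + 1) ∉ S → c (i, j + 1) = c (i, j)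
  eventually_top : ∃ N, ∀ i j, N ≤ j → c (i, j) = if p.1 < i then 1 else 0

namespace IsSideFunction

variable {S : Set (ℤ × ℤ)} {q p : ℤ × ℤ} {c : ℤ × ℤ → ℤ}

lemma refl (hq : q ∈ S) : IsSideFunction S q q fun x => if q.1 < x.1 then 1 else 0 where
  right i j hij := by
    have hne : ¬ (i = q.1 ∧ j = q.2) := by rintro ⟨rfl, rfl⟩; exact hij hq
    grind
  up _ _ _ := rfl
  eventually_top := ⟨0, fun _ _ _ => rfl⟩

-- Moving the end of the curve sideways shifts its upward ray to the new column.
lemma step {p' : ℤ × ℤ} (hc : IsSideFunction S q p c) (hp : p ∈ S) (hp' : p' ∈ S)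
    (hadj : GridAdj p p') :
    IsSideFunction S q p' fun x =>
      c x + (if p'.1 < x.1 ∧ p.2 ≤ x.2 then 1 else 0) -
        (if p.1 < x.1 ∧ p.2 ≤ x.2 then 1 else 0) := by
  have off {i j : ℤ} (hij : (i, j) ∉ S) :
      ¬ (i = p.1 ∧ j = p.2) ∧ ¬ (i = p'.1 ∧ j = p'.2) :=
    ⟨by rintro ⟨rfl, rfl⟩; exact hij hp, by rintro ⟨rfl, rfl⟩; exact hij hp'⟩
  have hcases := gridAdj_cases hadj
  obtain ⟨N, hN⟩ := hc.eventually_top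
  refine ⟨fun i j hij => ?_, fun i j hij => ?_, max N p.2, fun i j hj => ?_⟩
  · have := off hij
    simp only [hc.right i j hij]
    grind
  · have := off hij
    simp only [hc.up i j hij]
    grind
  · simp only [hN i j (le_of_max_le_left hj), le_of_max_le_right hj, and_true]
    ring

lemma eq_of_gridAdj (hc : IsSideFunction S q p c) {x y : ℤ × ℤ} (hadj : GridAdj x y)
    (hx : x ∉ S ∪ upRay p ∪ downRay q) (hy : y ∉ S ∪ upRay p ∪ downRay q) : c x = c y := by
  have right_eq {i j : ℤ} (h : (i, j) ∉ S ∪ upRay p ∪ downRay q) : c (i + 1, j) = c (i, j) := by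
    simp only [Set.mem_union, upRay, downRay, Set.mem_ofPred_eq, not_or] at h
    rw [hc.right i j h.1.1, if_neg h.1.2, if_neg h.2, add_zero, add_zero]
  have up_eq {i j : ℤ} (h : (i, j + 1) ∉ S ∪ upRay p ∪ downRay q) : c (i, j + 1) = c (i, j) :=
    hc.up i j fun hS => h (Or.inl (Or.inl hS))
  obtain ⟨x₁, x₂⟩ := x
  obtain ⟨y₁, y₂⟩ := y
  rcases gridAdj_cases hadj with ⟨h₁, h₂⟩ | ⟨h₁, h₂⟩ | ⟨h₁, h₂⟩ | ⟨h₁, h₂⟩ <;>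
    dsimp only at h₁ h₂ <;> subst h₁ h₂
  · exact (right_eq hx).symm
  · exact right_eq hy
  · exact (up_eq hy).symm
  · exact up_eq hx

lemma eq_of_upRay_disjoint (hc : IsSideFunction S q p c) {x : ℤ × ℤ}
    (hx : Disjoint (upRay x) S) : c x = if p.1 < x.1 then 1 else 0 := by
  have climb (n : ℕ) : c (x.1, x.2 + n) = c x := by
    induction n with
    | zero => simp
    | succ n ih =>
      rw [← ih, Nat.cast_succ, ← add_assoc]
      exact hc.up _ _ (hx.notMem_of_mem_left ⟨rfl, by dsimp only; omega⟩)
  obtain ⟨N, hN⟩ := hc.eventually_top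
  rw [← climb (N - x.2).toNat, hN _ _ (by omega)]

end IsSideFunction

lemma GridConnected.exists_isSideFunction {S : Set (ℤ × ℤ)} (hS : GridConnected S) {q p : ℤ × ℤ}
    (hq : q ∈ S) (hp : p ∈ S) : ∃ c, IsSideFunction S q p c := by
  induction hS q hq p hp with
  | refl => exact ⟨_, .refl hq⟩
  | tail _ hstep ih =>
    obtain ⟨c, hc⟩ := ih hstep.2.1
    exact ⟨_, hc.step hstep.2.1 hp hstep.1⟩

/-- The height of `x` transverse to the direction `v`, namely the determinant of `v` and `x`; it
vanishes exactly on the vectors parallel to `v`. -/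
def level (v x : ℤ × ℤ) : ℤ := v.1 * x.2 - v.2 * x.1

section level

variable {v : ℤ × ℤ}

lemma level_add (x y : ℤ × ℤ) : level v (x + y) = level v x + level v y := by
  simp only [level, Prod.fst_add, Prod.snd_add]
  ring

lemma level_neg (x : ℤ × ℤ) : level v (-x) = -level v x := by
  simp only [level, Prod.fst_neg, Prod.snd_neg]
  ring

lemma level_lt_of_mem_upRay (hv : 0 < v.1) {p x : ℤ × ℤ} (hx : x ∈ upRay p) :
    level v p < level v x := by
  rw [level, level, hx.1]
  gcongr
  exact hx.2

lemma level_lt_of_mem_downRay (hv : 0 < v.1) {q x : ℤ × ℤ} (hx : x ∈ downRay q) :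
    level v x < level v q := by
  rw [level, level, hx.1]
  gcongr
  exact hx.2

end level

lemma IsSideFunction.apply_add_of_level_eq_zero {S : Set (ℤ × ℤ)} {q p v u z : ℤ × ℤ}
    {c : ℤ × ℤ → ℤ} (hc : IsSideFunction S q p c) (hS : GridConnected S) (hp : p ∈ S)
    (hmin : IsMinOn (level v) S q) (hmax : IsMaxOn (level v) S p) (hv : 0 < v.1)
    (hu : level v u = 0) (hSu : ¬ HasChord S u) (hz : z ∈ S) :
    c (z + u) = if 0 < u.1 then 1 else 0 := by
  have level_eq (x : ℤ × ℤ) : level v (x + u) = level v x := by rw [level_add, hu, add_zero]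
  have off {x : ℤ × ℤ} (hx : x ∈ S) : x + u ∉ S ∪ upRay p ∪ downRay q := by
    rintro ((hxS | hup) | hdown)
    · exact hSu ⟨x, hx, hxS⟩
    · exact (level_lt_of_mem_upRay hv hup).not_ge ((level_eq x).trans_le (hmax hx))
    · exact (level_lt_of_mem_downRay hv hdown).not_ge ((hmin hx).trans_eq (level_eq x).symm)
  have upRay_disjoint : Disjoint (upRay (p + u)) S := Set.disjoint_left.2 fun x hx hxS =>
    (level_lt_of_mem_upRay hv hx).not_ge ((hmax hxS).trans_eq (level_eq p).symm)
  calc c (z + u) = c (p + u) := hS.eq_of_forall_gridAdj (f := fun x => c (x + u))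
        (fun _ hx _ hy hadj => hc.eq_of_gridAdj (hadj.add_right u) (off hx) (off hy)) hz hp
    _ = if p.1 < (p + u).1 then 1 else 0 := hc.eq_of_upRay_disjoint upRay_disjoint
    _ = if 0 < u.1 then 1 else 0 := by simp only [Prod.fst_add, lt_add_iff_pos_right]

namespace GridConnected

variable {S : Set (ℤ × ℤ)} {u v w : ℤ × ℤ}

lemma not_hasChord_add_of_finite (hS : GridConnected S) (hfin : S.Finite) (hu : 0 < u.1)
    (hw : 0 < w.1) (huw : level u w = 0) (hSu : ¬ HasChord S u) (hSw : ¬ HasChord S w) :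
    ¬ HasChord S (u + w) := by
  rintro ⟨x, hx, hxuw⟩
  obtain ⟨p, hp, hmax⟩ := Set.exists_max_image S (level u) hfin ⟨x, hx⟩
  obtain ⟨q, hq, hmin⟩ := Set.exists_min_image S (level u) hfin ⟨x, hx⟩
  obtain ⟨c, hc⟩ := hS.exists_isSideFunction hq hp
  have side {t z : ℤ × ℤ} (ht : level u t = 0) (hSt : ¬ HasChord S t) (hz : z ∈ S) :
      c (z + t) = if 0 < t.1 then 1 else 0 :=
    hc.apply_add_of_level_eq_zero hS hp hmin hmax hu ht hSt hz
  have huu : level u u = 0 := by rw [level, mul_comm, sub_self]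
  have hunegw : level u (-w) = 0 := by rw [level_neg, huw, neg_zero]
  have on_right : c (x + u) = 1 := by rw [side huu hSu hx, if_pos hu]
  have on_left : c (x + (u + w) + -w) = 0 := by
    rw [side hunegw (hasChord_neg.not.2 hSw) hxuw, Prod.fst_neg, if_neg (by omega)]
  rw [← add_assoc, add_neg_cancel_right, on_right] at on_left
  exact one_ne_zero on_left

theorem not_hasChord_add (hS : GridConnected S) (hu : 0 < u.1) (hw : 0 < w.1)
    (huw : level u w = 0) (hSu : ¬ HasChord S u) (hSw : ¬ HasChord S w) :
    ¬ HasChord S (u + w) := by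
  rintro ⟨x, hx, hxuw⟩
  obtain ⟨T, hTS, hfin, hT, hxT, hxuwT⟩ := hS.exists_finite_subset hx hxuw
  exact hT.not_hasChord_add_of_finite hfin hu hw huw (mt (.mono hTS) hSu) (mt (.mono hTS) hSw)
    ⟨x, hxT, hxuwT⟩

lemma not_hasChord_nsmul_of_fst_pos (hS : GridConnected S) (hv : 0 < v.1) (hSv : ¬ HasChord S v)
    {n : ℕ} (hn : 1 ≤ n) : ¬ HasChord S (n • v) := by
  induction n, hn using Nat.le_induction with
  | base => rwa [one_nsmul]
  | succ n hn ih =>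
    rw [succ_nsmul]
    refine hS.not_hasChord_add ?_ hv ?_ ih hSv
    · exact nsmul_pos hv (by omega)
    · simp only [level, Prod.smul_fst, Prod.smul_snd]
      ring

lemma not_hasChord_nsmul_of_fst_ne_zero (hS : GridConnected S) (hv : v.1 ≠ 0)
    (hSv : ¬ HasChord S v) {n : ℕ} (hn : 1 ≤ n) : ¬ HasChord S (n • v) := by
  rcases hv.lt_or_gt with hneg | hpos
  · rw [← hasChord_neg, ← smul_neg]
    exact hS.not_hasChord_nsmul_of_fst_pos (neg_pos.2 hneg) (hasChord_neg.not.2 hSv) hn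
  · exact hS.not_hasChord_nsmul_of_fst_pos hpos hSv hn

theorem not_hasChord_nsmul (hS : GridConnected S) (hSv : ¬ HasChord S v) {n : ℕ} (hn : 1 ≤ n) :
    ¬ HasChord S (n • v) := by
  by_cases hfst : v.1 = 0
  · by_cases hsnd : v.2 = 0
    · obtain rfl : v = 0 := Prod.ext hfst hsnd
      rwa [smul_zero]
    · rw [← hasChord_preimage_swap] at hSv ⊢
      exact hS.preimage_swap.not_hasChord_nsmul_of_fst_ne_zero hsnd hSv hn
  · exact hS.not_hasChord_nsmul_of_fst_ne_zero hfst hSv hn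

theorem not_hasChord_zsmul (hS : GridConnected S) (hSv : ¬ HasChord S v) {k : ℤ} (hk : k ≠ 0) :
    ¬ HasChord S (k • v) := by
  have hSn : ¬ HasChord S (k.natAbs • v) :=
    hS.not_hasChord_nsmul hSv (Int.natAbs_pos.2 hk)
  rw [← natCast_zsmul] at hSn
  rcases Int.natAbs_eq k with hk | hk <;> rw [hk]
  · exact hSn
  · rwa [neg_smul, hasChord_neg]

end GridConnected

theorem shape_translates_disjoint_general (S : Set (ℤ × ℤ)) (hconn : GridConnected S)
    (v : ℤ × ℤ) (hdisj : S ∩ setTranslate S v = ∅) :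
    ∀ k ℓ : ℤ, k ≠ ℓ → setTranslate S (k • v) ∩ setTranslate S (ℓ • v) = ∅ := by
  have hSv : ¬ HasChord S v := fun ⟨x, hx, hxv⟩ => by
    have hmem : x + v ∈ S ∩ setTranslate S v := ⟨hxv, x, hx, rfl⟩
    rwa [hdisj] at hmem
  intro k ℓ hkℓ
  rw [setTranslate_inter_eq_empty_iff, ← sub_smul]
  exact hconn.not_hasChord_zsmul hSv (sub_ne_zero.2 hkℓ)

/-- If a finite nonempty grid-connected set `S` is disjoint from `S + v` for a
nonzero vector `v`, then all translates `S + k • v`, `k ∈ ℤ`, are mutually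
disjoint. -/
theorem shape_translates_disjoint (S : Set (ℤ × ℤ))
    (hfin : S.Finite) (hne : S.Nonempty) (hconn : GridConnected S)
    (v : ℤ × ℤ) (hv : v ≠ 0)
    (hdisj : S ∩ setTranslate S v = ∅) :
    ∀ k ℓ : ℤ, k ≠ ℓ → setTranslate S (k • v) ∩ setTranslate S (ℓ • v) = ∅ :=
  shape_translates_disjoint_general S hconn v hdisj
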